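/- Let n ≥ 1 and let A, R, Q ∈ M_n(ℝ) with A Hurwitz and R and Q symmetric positive definite. Suppose the 2n×2n Hamiltonian matrix H = fromBlocks A R (−Q) (−Aᵀ) is hyperbolic, i.e. regarded as a complex matrix it has no purely imaginary eigenvalue iω with ω ∈ ℝ. Then there exists a symmetric positive definite matrix P ∈ M_n(ℝ) satisfying the algebraic Riccati equation AᵀP + PA + PRP + Q = 0. -/

import Mathlib

open Matrix

/-- A real square matrix is Hurwitz if every eigenvalue of it, regarded as a complex
matrix, has strictly negative real part. -/
def IsHurwitz {n : ℕ} (A : Matrix (Fin n) (Fin n) ℝ) : Prop :=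
  ∀ μ ∈ spectrum ℂ (A.map Complex.ofReal), μ.re < 0

/-! The Hamiltonian matrix `H` is skew-adjoint for the symplectic form, and having no imaginary
eigenvalue its characteristic polynomial factors as `p(X) q(-X)` with `p`, `q` Hurwitz. Since `p`
and `p(-X)` are coprime, the stable subspace `V = ker p(H)` is isotropic; so is `ker q(-H)`, and
these two span the space, so `V` is Lagrangian. If `(0, b) ∈ V`, isotropy gives `bᵀRb = 0`, hence
`Rb = 0`, and `H` acts on such vectors as `-Aᵀ`, whose eigenvalues lie in the right half-plane;
thus `b = 0`. So `V` is the graph of a matrix `P`: isotropy says that `P` is symmetric, invariance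
is the Riccati equation.

The equation makes `xᵀPAx` negative for `x ≠ 0`. Positivity of `P` is then Lyapunov's theorem: an
eigenvector `v` of `A` has `v*Pv > 0`, and one compresses `A` to the `P`-orthogonal complement of
`v` and inducts on the dimension. -/

section HurwitzPolynomial

open Polynomial

/-- A real Hurwitz polynomial: all its complex roots have negative real part. Nonzero constants
qualify. Polynomials with all roots in the open right half-plane are written `q.comp (-X)` with
`q` Hurwitz. -/
def IsHurwitzPolynomial (p : ℝ[X]) : Prop :=
  ∀ z : ℂ, aeval z p = 0 → z.re < 0

lemma IsHurwitzPolynomial.mul {p q : ℝ[X]} (hp : IsHurwitzPolynomial p)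
    (hq : IsHurwitzPolynomial q) : IsHurwitzPolynomial (p * q) := fun z hz ↦ by
  rw [map_mul, mul_eq_zero] at hz
  exact hz.elim (hp z) (hq z)

lemma IsHurwitzPolynomial.isCoprime_comp_neg_X {p q : ℝ[X]} (hp : IsHurwitzPolynomial p)
    (hq : IsHurwitzPolynomial q) : IsCoprime p (q.comp (-X)) := by
  rw [isCoprime_iff_aeval_ne_zero_of_isAlgClosed ℝ ℂ]
  intro z
  rw [or_iff_not_imp_left, not_not]
  intro hpz hqz
  rw [aeval_comp, map_neg, aeval_X] at hqz
  have hz := hp z hpz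
  have hneg := hq (-z) hqz
  rw [Complex.neg_re] at hneg
  linarith

lemma re_eq_re_of_irreducible_of_aeval_eq_zero {p : ℝ[X]} (hp : Irreducible p) {z w : ℂ}
    (hz : aeval z p = 0) (hw : aeval w p = 0) : w.re = z.re := by
  have hconj : IsConjRoot ℝ w z :=
    (minpoly.eq_of_irreducible hp hw).symm.trans (minpoly.eq_of_irreducible hp hz)
  have : IsAlgClosure ℝ ℂ := ⟨inferInstance, inferInstance⟩
  obtain ⟨σ, rfl⟩ := isConjRoot_iff_exists_algEquiv.mp hconj
  rcases Complex.real_algHom_eq_id_or_conj σ.toAlgHom with hσ | hσ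
  · exact congrArg Complex.re (DFunLike.congr_fun hσ z)
  · exact (congrArg Complex.re (DFunLike.congr_fun hσ z)).trans (Complex.conj_re z)

lemma isHurwitzPolynomial_or_comp_neg_X_of_irreducible {p : ℝ[X]} (hp : Irreducible p)
    (hre : ∀ z : ℂ, aeval z p = 0 → z.re ≠ 0) :
    IsHurwitzPolynomial p ∨ IsHurwitzPolynomial (p.comp (-X)) := by
  obtain ⟨z, hz⟩ := IsAlgClosed.exists_aeval_eq_zero ℂ p (degree_pos_of_irreducible hp).ne'
  refine (hre z hz).lt_or_gt.imp (fun hneg w hw ↦ ?_) (fun hpos w hw ↦ ?_)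
  · rwa [re_eq_re_of_irreducible_of_aeval_eq_zero hp hz hw]
  · rw [aeval_comp, map_neg, aeval_X] at hw
    have hre_eq := re_eq_re_of_irreducible_of_aeval_eq_zero hp hz hw
    rw [Complex.neg_re] at hre_eq
    linarith

lemma exists_eq_mul_comp_neg_X_of_re_ne_zero {f : ℝ[X]} (hf : f ≠ 0)
    (hre : ∀ z : ℂ, aeval z f = 0 → z.re ≠ 0) :
    ∃ p q : ℝ[X], IsHurwitzPolynomial p ∧ IsHurwitzPolynomial q ∧ f = p * q.comp (-X) := by
  induction f using WfDvdMonoid.induction_on_irreducible with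
  | zero => exact absurd rfl hf
  | unit u hu =>
    exact ⟨u, 1, fun z hz ↦ absurd hz (hu.map (aeval z)).ne_zero,
      fun z hz ↦ absurd hz (by simp), by simp⟩
  | mul a i ha hi ih =>
    obtain ⟨p, q, hp, hq, rfl⟩ := ih ha fun z hz ↦ hre z (by rw [map_mul, hz, mul_zero])
    rcases isHurwitzPolynomial_or_comp_neg_X_of_irreducible hi
      fun z hz ↦ hre z (by rw [map_mul, hz, zero_mul]) with hi' | hi'
    · exact ⟨i * p, q, hi'.mul hp, hq, (mul_assoc _ _ _).symm⟩
    · refine ⟨p, i.comp (-X) * q, hp, hi'.mul hq, ?_⟩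
      rw [mul_comp, comp_neg_X_comp_neg_X, mul_left_comm]

end HurwitzPolynomial

section SkewAdjoint

open Polynomial Module

lemma isAdjointPair_aeval {R M : Type*} [CommRing R] [AddCommGroup M] [Module R M]
    {B : LinearMap.BilinForm R M} {S T : End R M} (h : LinearMap.IsAdjointPair B B S T)
    (p : R[X]) : LinearMap.IsAdjointPair B B (aeval S p) (aeval T p) := by
  induction p using Polynomial.induction_on with
  | C a => simpa [Algebra.algebraMap_eq_smul_one] using LinearMap.isAdjointPair_one.smul a
  | add p q hp hq => simpa only [map_add] using! hp.add hq
  | monomial k a ih =>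
    have hS : aeval S (C a * X ^ (k + 1)) = S * aeval S (C a * X ^ k) := by
      rw [pow_succ', mul_left_comm, map_mul, aeval_X]
    have hT : aeval T (C a * X ^ (k + 1)) = aeval T (C a * X ^ k) * T := by
      rw [pow_succ, ← mul_assoc, map_mul, aeval_X]
    rw [hS, hT]
    exact h.mul ih

lemma aeval_apply_apply_of_intertwines {R M N : Type*} [CommRing R] [AddCommGroup M] [Module R M]
    [AddCommGroup N] [Module R N] {f : M →ₗ[R] N} {S : End R M} {T : End R N} {W : Submodule R M}
    (hS : ∀ x ∈ W, S x ∈ W) (hf : ∀ x ∈ W, f (S x) = T (f x)) (p : R[X]) {x : M} (hx : x ∈ W) :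
    f (aeval S p x) = aeval T p (f x) := by
  induction p using Polynomial.induction_on generalizing x with
  | C a => simp [Algebra.algebraMap_eq_smul_one]
  | add p q hp hq => simp only [map_add, LinearMap.add_apply, hp hx, hq hx]
  | monomial k a ih =>
    simp only [pow_succ, ← mul_assoc, map_mul _ _ X, End.mul_apply, aeval_X, ih (hS x hx), hf x hx]

lemma ker_aeval_mem_invtSubmodule {R M : Type*} [CommRing R] [AddCommGroup M] [Module R M]
    (T : End R M) (p : R[X]) : LinearMap.ker (aeval T p) ∈ T.invtSubmodule := by
  intro x hx
  have hcomm : Commute T (aeval T p) :=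
    Algebra.commute_of_mem_adjoin_self (aeval_mem_adjoin_singleton R T)
  rw [LinearMap.mem_ker] at hx
  rw [Submodule.mem_comap, LinearMap.mem_ker, ← End.mul_apply, ← hcomm.eq, End.mul_apply, hx,
    map_zero]

variable {K V : Type*} [Field K] [AddCommGroup V] [Module K V]
variable {B : LinearMap.BilinForm K V} {T : End K V}

lemma ker_aeval_le_orthogonal (hT : B.IsSkewAdjoint T) {p : K[X]}
    (hp : IsCoprime p (p.comp (-X))) :
    LinearMap.ker (aeval T p) ≤ B.orthogonal (LinearMap.ker (aeval T p)) := by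
  intro y hy x hx
  rw [LinearMap.mem_ker] at hx hy
  obtain ⟨a, b, hab⟩ := hp
  have hneg : aeval (-T) p = aeval T (p.comp (-X)) := by rw [aeval_comp, map_neg, aeval_X]
  -- Bézout exhibits `y` as a value of `p(-T)`, the adjoint of `p(T)`, which kills `x`.
  have hy' : aeval (-T) p (aeval T b y) = y := by
    rw [hneg, ← End.mul_apply, ← map_mul, mul_comm, eq_sub_of_add_eq' hab, map_sub, map_one,
      map_mul, LinearMap.sub_apply, End.mul_apply, hy, map_zero, sub_zero, End.one_apply]
  rw [← hy', ← isAdjointPair_aeval (T := -T) hT p x, hx, map_zero, LinearMap.zero_apply]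

variable [FiniteDimensional K V]

lemma two_mul_finrank_le_of_le_orthogonal (hB : B.Nondegenerate) {W : Submodule K V}
    (hW : W ≤ B.orthogonal W) : 2 * finrank K W ≤ finrank K V := by
  have hle := Submodule.finrank_mono hW
  rw [LinearMap.BilinForm.finrank_orthogonal hB] at hle
  lia

lemma two_mul_finrank_ker_aeval (hB : B.Nondegenerate) (hT : B.IsSkewAdjoint T) {p q : K[X]}
    (hpq : T.charpoly = p * q) (hcop : IsCoprime p q) (hp : IsCoprime p (p.comp (-X)))
    (hq : IsCoprime q (q.comp (-X))) :
    2 * finrank K (LinearMap.ker (aeval T p)) = finrank K V := by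
  have hsup : LinearMap.ker (aeval T p) ⊔ LinearMap.ker (aeval T q) = ⊤ := by
    rw [sup_ker_aeval_eq_ker_aeval_mul_of_coprime T hcop, ← hpq, LinearMap.aeval_self_charpoly,
      LinearMap.ker_zero]
  have hadd := Submodule.finrank_add_le_finrank_add_finrank (LinearMap.ker (aeval T p))
    (LinearMap.ker (aeval T q))
  rw [hsup, finrank_top] at hadd
  have hlep := two_mul_finrank_le_of_le_orthogonal hB (ker_aeval_le_orthogonal hT hp)
  have hleq := two_mul_finrank_le_of_le_orthogonal hB (ker_aeval_le_orthogonal hT hq)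
  lia

end SkewAdjoint

section Hamiltonian

open Polynomial Module

variable {ι : Type*}

/-- The Hamiltonian matrix of the algebraic Riccati equation
`Aᵀ * P + P * A + P * R * P + Q = 0`: a matrix `P` solves the equation iff its graph
`{(a, P *ᵥ a)}` is invariant under `hamiltonian A R Q`. -/
def hamiltonian {K : Type*} [Neg K] (A R Q : Matrix ι ι K) : Matrix (ι ⊕ ι) (ι ⊕ ι) K :=
  fromBlocks A R (-Q) (-Aᵀ)

variable [Fintype ι]

section CommRing

variable {K : Type*} [CommRing K] {A R Q P : Matrix ι ι K} {V : Submodule K (ι ⊕ ι → K)}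

lemma hamiltonian_mulVec_elim (a b : ι → K) :
    hamiltonian A R Q *ᵥ (a ⊕ᵥ b) =
      (A *ᵥ a + R *ᵥ b) ⊕ᵥ (-(Q *ᵥ a) - Aᵀ *ᵥ b) := by
  simp [hamiltonian, fromBlocks_mulVec, neg_mulVec, sub_eq_add_neg]

variable [DecidableEq ι]

lemma toBilin'_J_elim (a b c d : ι → K) :
    (J ι K).toBilin' (a ⊕ᵥ b) (c ⊕ᵥ d) = b ⬝ᵥ c - a ⬝ᵥ d := by
  simp [J, toBilin'_apply', fromBlocks_mulVec, neg_mulVec, sub_eq_neg_add]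

lemma nondegenerate_toBilin'_J [IsDomain K] : (J ι K).toBilin'.Nondegenerate :=
  LinearMap.BilinForm.nondegenerate_toBilin'_of_det_ne_zero' _ (isUnit_det_J ι K).ne_zero

lemma isSkewAdjoint_toLin'_hamiltonian (hR : R.IsSymm) (hQ : Q.IsSymm) :
    (J ι K).toBilin'.IsSkewAdjoint (toLin' (hamiltonian A R Q)) := by
  have hJ : (J ι K).IsSkewAdjoint (hamiltonian A R Q) := by
    change (hamiltonian A R Q)ᵀ * J ι K = J ι K * -hamiltonian A R Q
    simp [hamiltonian, J, fromBlocks_transpose, fromBlocks_multiply, fromBlocks_neg, hR.eq, hQ.eq]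
  simpa using! (isAdjointPair_toLinearMap₂' (J ι K) (J ι K) _ _).mpr hJ

lemma isSymm_of_elim_mulVec_mem (hP : ∀ a, a ⊕ᵥ P *ᵥ a ∈ V)
    (hV : V ≤ (J ι K).toBilin'.orthogonal V) : P.IsSymm := by
  ext i j
  have h := hV (hP (Pi.single i 1)) _ (hP (Pi.single j 1))
  rw [toBilin'_J_elim, sub_eq_zero] at h
  simpa using h.symm

lemma riccati_of_elim_mem_iff (hP : ∀ a b, a ⊕ᵥ b ∈ V ↔ b = P *ᵥ a)
    (hV : V ∈ End.invtSubmodule (toLin' (hamiltonian A R Q))) :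
    Aᵀ * P + P * A + P * R * P + Q = 0 := by
  refine ext_of_mulVec_single fun i ↦ ?_
  have h := hV ((hP (Pi.single i 1) _).mpr rfl)
  rw [Submodule.mem_comap, toLin'_apply, hamiltonian_mulVec_elim, hP] at h
  simp only [mulVec_add, mulVec_mulVec, ← mul_assoc] at h
  simp only [add_mulVec, zero_mulVec]
  linear_combination (exp := 1) -h

lemma aeval_neg_transpose_charpoly_comp_neg_X (A : Matrix ι ι K) :
    aeval (toLin' (-Aᵀ)) (A.charpoly.comp (-X)) = 0 := by
  have h := LinearMap.aeval_self_charpoly (toLin' Aᵀ)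
  rw [charpoly_toLin', charpoly_transpose] at h
  rw [aeval_comp, map_neg, aeval_X, map_neg, neg_neg, h]

end CommRing

lemma exists_elim_mem_iff_eq_mulVec {K m n : Type*} [Field K] [Fintype m] [Finite n]
    {V : Submodule K (m ⊕ n → K)} (hdim : finrank K V = Fintype.card m)
    (hV : ∀ b, (0 : m → K) ⊕ᵥ b ∈ V → b = 0) :
    ∃ P : Matrix n m K, ∀ a b, a ⊕ᵥ b ∈ V ↔ b = P *ᵥ a := by
  classical
  let fst : V →ₗ[K] m → K := (LinearMap.funLeft K K Sum.inl).domRestrict V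
  have hfst : Function.Injective fst := by
    rw [injective_iff_map_eq_zero]
    rintro ⟨x, hx⟩ (h : x ∘ Sum.inl = 0)
    have hsplit : x = (0 : m → K) ⊕ᵥ x ∘ Sum.inr := by rw [← h, Sum.elim_comp_inl_inr]
    have hinr : x ∘ Sum.inr = 0 := hV _ (hsplit ▸ hx)
    rw [hinr, Sum.elim_zero_zero] at hsplit
    exact Subtype.ext hsplit
  let e : V ≃ₗ[K] m → K := LinearEquiv.ofInjectiveOfFinrankEq fst hfst (by simpa using hdim)
  let snd : (m → K) →ₗ[K] n → K := LinearMap.funLeft K K Sum.inr ∘ₗ V.subtype ∘ₗ e.symm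
  have he (a : m → K) : (e.symm a : m ⊕ n → K) = a ⊕ᵥ snd a := by
    have hinl : (e.symm a : m ⊕ n → K) ∘ Sum.inl = a := e.apply_symm_apply a
    rw [← Sum.elim_comp_inl_inr (e.symm a : m ⊕ n → K), hinl]
    rfl
  refine ⟨LinearMap.toMatrix' snd, fun a b ↦ ?_⟩
  rw [LinearMap.toMatrix'_mulVec]
  refine ⟨fun hab ↦ ?_, fun hb ↦ ?_⟩
  · have hea : e.symm a = ⟨a ⊕ᵥ b, hab⟩ := e.symm_apply_eq.mpr rfl
    exact (congrArg (fun x : V ↦ (x : m ⊕ n → K) ∘ Sum.inr) hea).symm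
  · rw [hb, ← he]
    exact (e.symm a).2

variable [DecidableEq ι]

lemma aeval_charpoly_eq_zero_iff_mem_spectrum (M : Matrix ι ι ℝ) (z : ℂ) :
    aeval z M.charpoly = 0 ↔ z ∈ spectrum ℂ (M.map Complex.ofReal) := by
  have hmap : (M.map Complex.ofReal).charpoly = M.charpoly.map (algebraMap ℝ ℂ) :=
    charpoly_map M (algebraMap ℝ ℂ)
  rw [mem_spectrum_iff_isRoot_charpoly, hmap, IsRoot, eval_map_algebraMap]

variable {A R Q : Matrix ι ι ℝ}

lemma mulVec_eq_zero_of_elim_zero_mem (hR : R.PosSemidef) {V : Submodule ℝ (ι ⊕ ι → ℝ)}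
    (hV : V ≤ (J ι ℝ).toBilin'.orthogonal V)
    (hinv : V ∈ End.invtSubmodule (toLin' (hamiltonian A R Q))) {b : ι → ℝ}
    (hb : (0 : ι → ℝ) ⊕ᵥ b ∈ V) : R *ᵥ b = 0 := by
  have h := hV (hinv hb) _ hb
  rw [toLin'_apply, hamiltonian_mulVec_elim, toBilin'_J_elim] at h
  rw [← hR.dotProduct_mulVec_zero_iff]
  simpa using h

lemma eq_zero_of_elim_zero_mem_ker_aeval (hA : IsHurwitzPolynomial A.charpoly) (hR : R.PosSemidef)
    (hQ : Q.IsSymm) {p : ℝ[X]} (hp : IsHurwitzPolynomial p) {b : ι → ℝ}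
    (hb : (0 : ι → ℝ) ⊕ᵥ b ∈ LinearMap.ker (aeval (toLin' (hamiltonian A R Q)) p)) : b = 0 := by
  set V := LinearMap.ker (aeval (toLin' (hamiltonian A R Q)) p)
  have hRsymm : R.IsSymm := isHermitian_iff_isSymm.mp hR.isHermitian
  have hinv : V ∈ End.invtSubmodule (toLin' (hamiltonian A R Q)) :=
    ker_aeval_mem_invtSubmodule _ p
  have hV : V ≤ (J ι ℝ).toBilin'.orthogonal V :=
    ker_aeval_le_orthogonal (isSkewAdjoint_toLin'_hamiltonian hRsymm hQ)
      (hp.isCoprime_comp_neg_X hp)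
  let f : (ι → ℝ) →ₗ[ℝ] ι ⊕ ι → ℝ :=
    (LinearEquiv.sumArrowLequivProdArrow ι ι ℝ ℝ).symm ∘ₗ LinearMap.inr ℝ (ι → ℝ) (ι → ℝ)
  have hf (c : ι → ℝ) : f c = (0 : ι → ℝ) ⊕ᵥ c := rfl
  have hfmap : ∀ c ∈ V.comap f, f (toLin' (-Aᵀ) c) = toLin' (hamiltonian A R Q) (f c) := by
    intro c hc
    rw [hf, hf, toLin'_apply, toLin'_apply, hamiltonian_mulVec_elim,
      mulVec_eq_zero_of_elim_zero_mem (b := c) hR hV hinv hc]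
    simp [neg_mulVec]
  have hfinv : ∀ c ∈ V.comap f, toLin' (-Aᵀ) c ∈ V.comap f := fun c hc ↦ by
    rw [Submodule.mem_comap, hfmap c hc]
    exact hinv hc
  have hpb : aeval (toLin' (-Aᵀ)) p b = 0 := by
    have h := aeval_apply_apply_of_intertwines hfinv hfmap p (x := b) hb
    rw [hf, hf, LinearMap.mem_ker.mp hb] at h
    exact congrArg (· ∘ Sum.inr) h
  have hAb : aeval (toLin' (-Aᵀ)) (A.charpoly.comp (-X)) b = 0 := by
    rw [aeval_neg_transpose_charpoly_comp_neg_X, LinearMap.zero_apply]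
  have hdisj := disjoint_ker_aeval_of_isCoprime (toLin' (-Aᵀ)) (hp.isCoprime_comp_neg_X hA)
  exact Submodule.disjoint_def.mp hdisj b hpb hAb

theorem exists_isSymm_riccati (hA : IsHurwitzPolynomial A.charpoly) (hR : R.PosSemidef)
    (hQ : Q.IsSymm) (hH : ∀ z : ℂ, aeval z (hamiltonian A R Q).charpoly = 0 → z.re ≠ 0) :
    ∃ P : Matrix ι ι ℝ, P.IsSymm ∧ Aᵀ * P + P * A + P * R * P + Q = 0 := by
  have hRsymm : R.IsSymm := isHermitian_iff_isSymm.mp hR.isHermitian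
  obtain ⟨p, q, hp, hq, hpq⟩ :=
    exists_eq_mul_comp_neg_X_of_re_ne_zero (charpoly_monic _).ne_zero hH
  have hskew := isSkewAdjoint_toLin'_hamiltonian (A := A) hRsymm hQ
  have hpp := hp.isCoprime_comp_neg_X hp
  have hqq : IsCoprime (q.comp (-X)) ((q.comp (-X)).comp (-X)) := by
    rw [comp_neg_X_comp_neg_X]
    exact (hq.isCoprime_comp_neg_X hq).symm
  have hdim : finrank ℝ (LinearMap.ker (aeval (toLin' (hamiltonian A R Q)) p)) =
      Fintype.card ι := by
    have h := two_mul_finrank_ker_aeval nondegenerate_toBilin'_J hskew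
      ((charpoly_toLin' _).trans hpq) (hp.isCoprime_comp_neg_X hq) hpp hqq
    rw [finrank_fintype_fun_eq_card, Fintype.card_sum] at h
    lia
  obtain ⟨P, hP⟩ := exists_elim_mem_iff_eq_mulVec hdim
    fun b hb ↦ eq_zero_of_elim_zero_mem_ker_aeval hA hR hQ hp hb
  exact ⟨P,
    isSymm_of_elim_mulVec_mem (fun a ↦ (hP a _).mpr rfl) (ker_aeval_le_orthogonal hskew hpp),
    riccati_of_elim_mem_iff hP (ker_aeval_mem_invtSubmodule _ p)⟩

end Hamiltonian

section Lyapunov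

open Module

lemma hasEigenvalue_of_hasEigenvalue_compression {K V : Type*} [Field K] [AddCommGroup V]
    [Module K V] {T : End K V} {μ ν : K} {v : V} (hv : T v = μ • v) {W : Submodule K V}
    (hvW : v ∉ W) {S : End K W} (hS : ∀ w : W, ∃ a : K, T w = S w + a • v)
    (hν : S.HasEigenvalue ν) : T.HasEigenvalue ν := by
  rcases eq_or_ne ν μ with rfl | hne
  · exact End.hasEigenvalue_of_hasEigenvector
      ⟨End.mem_eigenspace_iff.mpr hv, fun h0 ↦ hvW (h0 ▸ W.zero_mem)⟩
  obtain ⟨w, hw⟩ := hν.exists_hasEigenvector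
  obtain ⟨a, ha⟩ := hS w
  rw [hw.apply_eq_smul, W.coe_smul] at ha
  have hsub : ν - μ ≠ 0 := sub_ne_zero.mpr hne
  refine End.hasEigenvalue_of_hasEigenvector (x := (w : V) + (a / (ν - μ)) • v)
    ⟨End.mem_eigenspace_iff.mpr ?_, fun h0 ↦ ?_⟩
  · have hcoeff : a + a / (ν - μ) * μ = ν * (a / (ν - μ)) := by field_simp; ring
    rw [map_add, map_smul, ha, hv, smul_add, smul_smul, smul_smul, ← hcoeff, add_smul, add_assoc]
  · have hmem : (a / (ν - μ)) • v ∈ W := by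
      rw [← neg_eq_of_add_eq_zero_right h0]
      exact W.neg_mem w.2
    have hcoeff : a / (ν - μ) = 0 := by
      by_contra hcoeff
      exact hvW ((W.smul_mem_iff hcoeff).mp hmem)
    rw [hcoeff, zero_smul, add_zero] at h0
    exact hw.2 (Subtype.ext h0)

variable {V : Type*} [AddCommGroup V] [Module ℂ V]

lemma re_apply_self_pos_of_apply_eq_smul {B : V →ₗ⋆[ℂ] V →ₗ[ℂ] ℂ} (hB : B.IsSymm) {T : End ℂ V}
    {μ : ℂ} {v : V} (hv : T v = μ • v) (hμ : μ.re < 0) (hneg : (B v (T v)).re < 0) :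
    0 < (B v v).re := by
  have him : (B v v).im = 0 := Complex.conj_eq_iff_im.mp (hB.eq v v)
  rw [hv, map_smul, smul_eq_mul, Complex.mul_re, him, mul_zero, sub_zero] at hneg
  exact pos_of_mul_neg_right hneg hμ.le

lemma re_apply_self_pos_of_forall_mem_ker {B : V →ₗ⋆[ℂ] V →ₗ[ℂ] ℂ} (hB : B.IsSymm) {v : V}
    (hv : 0 < (B v v).re) (hker : ∀ w ∈ LinearMap.ker (B v), w ≠ 0 → 0 < (B w w).re)
    {x : V} (hx : x ≠ 0) : 0 < (B x x).re := by
  have hvv : B v v ≠ 0 := fun h ↦ by simp [h] at hv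
  obtain ⟨a, w, hw, rfl⟩ : ∃ a : ℂ, ∃ w ∈ LinearMap.ker (B v), x = a • v + w :=
    ⟨B v x / B v v, x - (B v x / B v v) • v, by simp [hvv], by abel⟩
  rw [LinearMap.mem_ker] at hw
  have hwv : B w v = 0 := hB.isRefl v w hw
  have hxx : (B (a • v + w) (a • v + w)).re = Complex.normSq a * (B v v).re + (B w w).re := by
    simp only [map_add, map_smulₛₗ, LinearMap.add_apply, LinearMap.smul_apply, smul_eq_mul,
      RingHom.id_apply, hw, hwv, mul_zero, add_zero, zero_add, Complex.add_re, ← mul_assoc,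
      Complex.mul_conj, Complex.re_ofReal_mul]
  rw [hxx]
  rcases eq_or_ne w 0 with rfl | hw0
  · have ha : a ≠ 0 := by rintro rfl; simp at hx
    simpa using mul_pos (Complex.normSq_pos.mpr ha) hv
  · exact add_pos_of_nonneg_of_pos (mul_nonneg (Complex.normSq_nonneg a) hv.le) (hker w hw hw0)

theorem re_apply_self_pos_of_re_apply_map_neg [FiniteDimensional ℂ V]
    {B : V →ₗ⋆[ℂ] V →ₗ[ℂ] ℂ} (hB : B.IsSymm) {T : End ℂ V}
    (hT : ∀ μ, T.HasEigenvalue μ → μ.re < 0) (hneg : ∀ x ≠ 0, (B x (T x)).re < 0)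
    {x : V} (hx : x ≠ 0) : 0 < (B x x).re := by
  induction hdim : finrank ℂ V using Nat.strong_induction_on generalizing V with
  | _ n ih =>
  have : Nontrivial V := ⟨x, 0, hx⟩
  obtain ⟨μ, hμ⟩ := End.exists_eigenvalue T
  obtain ⟨v, hv⟩ := hμ.exists_hasEigenvector
  have hvv := re_apply_self_pos_of_apply_eq_smul hB hv.apply_eq_smul (hT μ hμ) (hneg v hv.2)
  have hvv0 : B v v ≠ 0 := fun h ↦ by simp [h] at hvv
  let W := LinearMap.ker (B v)
  have hvW : v ∉ W := hvv0
  -- The compression of `T` to `W` along `v`.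
  let S : End ℂ W := ((T - (LinearMap.toSpanSingleton ℂ V v) ∘ₗ ((B v v)⁻¹ • B v ∘ₗ T)) ∘ₗ
    W.subtype).codRestrict W fun w ↦ by simp [W, mul_right_comm _ _ (B v v), hvv0]
  have hS (w : W) : T w = S w + ((B v v)⁻¹ * B v (T w)) • v := by simp [S]
  have hST (ν : ℂ) (hν : S.HasEigenvalue ν) : ν.re < 0 :=
    hT ν (hasEigenvalue_of_hasEigenvalue_compression hv.apply_eq_smul hvW (fun w ↦ ⟨_, hS w⟩) hν)
  have hSneg (u : W) (hu : u ≠ 0) : (B.domRestrict₁₂ W W u (S u)).re < 0 := by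
    have huv : B u v = 0 := hB.isRefl v u u.2
    have huT := hneg u (by simpa using hu)
    rw [hS, map_add, map_smul, huv, smul_zero, add_zero] at huT
    exact huT
  have hWlt : finrank ℂ W < n :=
    hdim ▸ Submodule.finrank_lt fun htop ↦ hvW (htop ▸ Submodule.mem_top)
  exact re_apply_self_pos_of_forall_mem_ker hB hvv (fun w hw hw0 ↦
    ih _ hWlt (hB.domRestrict W) hST hSneg (x := ⟨w, hw⟩) (by simpa using hw0) rfl) hx

variable {ι : Type*} [Fintype ι]

lemma re_star_dotProduct_map_ofReal_mulVec (M : Matrix ι ι ℝ) (z : ι → ℂ) :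
    (star z ⬝ᵥ M.map Complex.ofReal *ᵥ z).re =
      (Complex.re ∘ z) ⬝ᵥ M *ᵥ (Complex.re ∘ z) + (Complex.im ∘ z) ⬝ᵥ M *ᵥ (Complex.im ∘ z) := by
  simp only [dotProduct, mulVec, Complex.re_sum, ← Finset.sum_add_distrib, Finset.mul_sum]
  refine Finset.sum_congr rfl fun i _ ↦ Finset.sum_congr rfl fun j _ ↦ ?_
  simp

lemma re_star_dotProduct_map_ofReal_mulVec_neg {M : Matrix ι ι ℝ}
    (hM : ∀ x ≠ 0, x ⬝ᵥ M *ᵥ x < 0) {z : ι → ℂ} (hz : z ≠ 0) :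
    (star z ⬝ᵥ M.map Complex.ofReal *ᵥ z).re < 0 := by
  have hM' (x : ι → ℝ) : x ⬝ᵥ M *ᵥ x ≤ 0 := by
    rcases eq_or_ne x 0 with rfl | hx
    · simp
    · exact (hM x hx).le
  rw [re_star_dotProduct_map_ofReal_mulVec]
  by_cases hre : Complex.re ∘ z = 0
  · have him : Complex.im ∘ z ≠ 0 := fun him ↦
      hz (funext fun i ↦ Complex.ext (congrFun hre i) (congrFun him i))
    exact add_neg_of_nonpos_of_neg (hM' _) (hM _ him)
  · exact add_neg_of_neg_of_nonpos (hM _ hre) (hM' _)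

theorem dotProduct_mulVec_pos_of_lyapunov [DecidableEq ι] {A P : Matrix ι ι ℝ}
    (hA : ∀ μ ∈ spectrum ℂ (A.map Complex.ofReal), μ.re < 0) (hP : P.IsSymm)
    (hneg : ∀ x ≠ 0, x ⬝ᵥ (P * A) *ᵥ x < 0) {x : ι → ℝ} (hx : x ≠ 0) : 0 < x ⬝ᵥ P *ᵥ x := by
  let B := toLinearMapₛₗ₂' ℂ (starRingEnd ℂ) (RingHom.id ℂ) (P.map Complex.ofReal)
  have hBapply (z w : ι → ℂ) : B z w = star z ⬝ᵥ P.map Complex.ofReal *ᵥ w := by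
    simp [B, toLinearMapₛₗ₂'_apply, dotProduct, mulVec, Finset.mul_sum, mul_comm (w _)]
  have hB : B.IsSymm := by
    rw [LinearMap.isSymm_iff_basis (Pi.basisFun ℂ ι)]
    intro i j
    simp [B, toLinearMapₛₗ₂'_single, hP.apply i j]
  have hT (μ : ℂ) (hμ : End.HasEigenvalue (toLin' (A.map Complex.ofReal)) μ) : μ.re < 0 := by
    refine hA μ ?_
    rwa [← spectrum_toLin', ← End.hasEigenvalue_iff_mem_spectrum]
  have hBneg (z : ι → ℂ) (hz : z ≠ 0) : (B z (toLin' (A.map Complex.ofReal) z)).re < 0 := by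
    have hmap : P.map Complex.ofReal * A.map Complex.ofReal = (P * A).map Complex.ofReal :=
      (Matrix.map_mul (f := Complex.ofRealHom)).symm
    rw [hBapply, toLin'_apply, mulVec_mulVec, hmap]
    exact re_star_dotProduct_map_ofReal_mulVec_neg hneg hz
  have hx' : Complex.ofReal ∘ x ≠ 0 := fun h ↦
    hx (funext fun i ↦ Complex.ofReal_injective (congrFun h i))
  have hpos := re_apply_self_pos_of_re_apply_map_neg hB hT hBneg hx'
  rw [hBapply, re_star_dotProduct_map_ofReal_mulVec] at hpos
  simpa [Function.comp_def, ← Pi.zero_def] using hpos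

end Lyapunov

section Riccati

variable {ι : Type*} [Fintype ι] {A R Q P : Matrix ι ι ℝ}

lemma dotProduct_mul_mulVec_neg_of_riccati (hR : R.PosSemidef) (hQ : Q.PosDef) (hP : P.IsSymm)
    (hric : Aᵀ * P + P * A + P * R * P + Q = 0) {x : ι → ℝ} (hx : x ≠ 0) :
    x ⬝ᵥ (P * A) *ᵥ x < 0 := by
  have htrans : x ⬝ᵥ (Aᵀ * P) *ᵥ x = x ⬝ᵥ (P * A) *ᵥ x := by
    rw [dotProduct_mulVec, ← mulVec_transpose, transpose_mul, transpose_transpose, hP.eq,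
      dotProduct_comm]
  have hPRP : x ⬝ᵥ (P * R * P) *ᵥ x = (P *ᵥ x) ⬝ᵥ R *ᵥ (P *ᵥ x) := by
    rw [mul_assoc, ← mulVec_mulVec, dotProduct_mulVec, ← mulVec_transpose, hP.eq, mulVec_mulVec]
  have hsum := congrArg (x ⬝ᵥ · *ᵥ x) hric
  simp only [add_mulVec, dotProduct_add, htrans, hPRP, zero_mulVec, dotProduct_zero] at hsum
  have hRx := hR.dotProduct_mulVec_nonneg (P *ᵥ x)
  have hQx := hQ.dotProduct_mulVec_pos hx
  rw [star_trivial] at hRx hQx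
  linarith

theorem stmt_5_general [DecidableEq ι] (hA : ∀ μ ∈ spectrum ℂ (A.map Complex.ofReal), μ.re < 0)
    (hR : R.PosSemidef) (hQ : Q.PosDef)
    (hHyp : ∀ ω : ℝ, Complex.I * (ω : ℂ) ∉
      spectrum ℂ ((fromBlocks A R (-Q) (-Aᵀ)).map Complex.ofReal)) :
    ∃ P : Matrix ι ι ℝ, P.PosDef ∧ Aᵀ * P + P * A + P * R * P + Q = 0 := by
  have hcharA : IsHurwitzPolynomial A.charpoly := fun z hz ↦
    hA z ((aeval_charpoly_eq_zero_iff_mem_spectrum A z).mp hz)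
  have hcharH (z : ℂ) (hz : Polynomial.aeval z (hamiltonian A R Q).charpoly = 0) : z.re ≠ 0 := by
    intro hre
    have hz' : Complex.I * (z.im : ℂ) = z := by apply Complex.ext <;> simp [hre]
    refine hHyp z.im ?_
    rw [hz']
    exact (aeval_charpoly_eq_zero_iff_mem_spectrum _ z).mp hz
  obtain ⟨P, hP, hric⟩ :=
    exists_isSymm_riccati hcharA hR (isHermitian_iff_isSymm.mp hQ.isHermitian) hcharH
  exact ⟨P, .of_dotProduct_mulVec_pos (isHermitian_iff_isSymm.mpr hP) fun x hx ↦
    dotProduct_mulVec_pos_of_lyapunov hA hP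
      (fun _ hy ↦ dotProduct_mul_mulVec_neg_of_riccati hR hQ hP hric hy) hx, hric⟩

end Riccati

/-- Lemma 1: if `A` is Hurwitz, `R`, `Q` are symmetric positive definite, and the
Hamiltonian matrix `fromBlocks A R (-Q) (-Aᵀ)` has no purely imaginary eigenvalue,
then the algebraic Riccati equation `AᵀP + PA + PRP + Q = 0` has a symmetric positive
definite solution. -/
theorem stmt_5 (n : ℕ) (hn : 1 ≤ n) (A R Q : Matrix (Fin n) (Fin n) ℝ)
    (hA : IsHurwitz A)
    (hRsymm : R.IsSymm)
    (hRpos : ∀ x : Fin n → ℝ, x ≠ 0 → 0 < x ⬝ᵥ R.mulVec x)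
    (hQsymm : Q.IsSymm)
    (hQpos : ∀ x : Fin n → ℝ, x ≠ 0 → 0 < x ⬝ᵥ Q.mulVec x)
    (hHyp : ∀ ω : ℝ, Complex.I * (ω : ℂ) ∉
      spectrum ℂ ((Matrix.fromBlocks A R (-Q) (-Aᵀ)).map Complex.ofReal)) :
    ∃ P : Matrix (Fin n) (Fin n) ℝ, P.IsSymm ∧
      (∀ x : Fin n → ℝ, x ≠ 0 → 0 < x ⬝ᵥ P.mulVec x) ∧
      Aᵀ * P + P * A + P * R * P + Q = 0 := by
  obtain ⟨P, hP, hric⟩ := stmt_5_general hA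
    (PosDef.of_dotProduct_mulVec_pos (isHermitian_iff_isSymm.mpr hRsymm) fun x ↦ hRpos x).posSemidef
    (.of_dotProduct_mulVec_pos (isHermitian_iff_isSymm.mpr hQsymm) fun x ↦ hQpos x) hHyp
  exact ⟨P, isHermitian_iff_isSymm.mp hP.isHermitian, fun _ ↦ hP.dotProduct_mulVec_pos, hric⟩
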